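/- arXiv:1611.07347 — 4 statements merged into one kernel-verified Lean document; each statement's English description precedes it below -/
import Mathlib

section
/- If AD − B² > 0, then w* minimizes the portfolio variance subject to the budget and target-return constraints: for every w ∈ ℝ^p with 1_p^T w = 1 and μ^T w = ρ, one has w*^T Σ w* ≤ w^T Σ w. -/
open Matrix

/-!
If `S x` lies in the row space of the constraint matrix `C` (the Lagrange condition), then `S x` is
orthogonal to every displacement `w - x` between feasible points, so the variance of `w`
is that of `x` plus that of `w - x`. The Lagrange condition and `C x = C w` together amount to
`x = S⁻¹ Cᴴ l` with `(C S⁻¹ Cᴴ) l = C w`. For Markowitz, `C` has the two rows `1_p` and `μ`, the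
Gram matrix `C S⁻¹ Cᴴ` is `!![A, B; B, D]`, and Cramer's rule gives the coefficients of `w*`.
-/

theorem star_star_dotProduct_mulVec_of_isHermitian {n R : Type*} [Fintype n]
    [NonUnitalSemiring R] [StarRing R] {M : Matrix n n R} (hM : M.IsHermitian)
    (x y : n → R) :
    star (star x ⬝ᵥ (M *ᵥ y)) = star y ⬝ᵥ (M *ᵥ x) := by
  rw [← star_dotProduct, star_mulVec, hM.eq, dotProduct_mulVec]

section PosSemidef

variable {m n R : Type*} [Fintype n] [Ring R] [PartialOrder R] [StarRing R] [IsOrderedAddMonoid R]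
  {S : Matrix n n R} {x w : n → R}

theorem star_dotProduct_mulVec_le_of_star_sub_dotProduct_mulVec_eq_zero (hS : S.PosSemidef)
    (horth : star (w - x) ⬝ᵥ (S *ᵥ x) = 0) :
    star x ⬝ᵥ (S *ᵥ x) ≤ star w ⬝ᵥ (S *ᵥ w) := by
  have horth' : star x ⬝ᵥ (S *ᵥ (w - x)) = 0 := by
    rw [← star_star_dotProduct_mulVec_of_isHermitian hS.isHermitian, horth, star_zero]
  calc star x ⬝ᵥ (S *ᵥ x)
      ≤ star x ⬝ᵥ (S *ᵥ x) + star (w - x) ⬝ᵥ (S *ᵥ (w - x)) :=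
        le_add_of_nonneg_right (hS.dotProduct_mulVec_nonneg _)
    _ = star (x + (w - x)) ⬝ᵥ (S *ᵥ (x + (w - x))) := by
        rw [star_add, mulVec_add, add_dotProduct, dotProduct_add, dotProduct_add, horth, horth',
          add_zero, zero_add]
    _ = star w ⬝ᵥ (S *ᵥ w) := by rw [add_sub_cancel]

theorem star_dotProduct_mulVec_le_of_mulVec_eq_conjTranspose_mulVec [Fintype m]
    {C : Matrix m n R} {l : m → R} (hS : S.PosSemidef)
    (hlagrange : S *ᵥ x = Cᴴ *ᵥ l) (hfeasible : C *ᵥ x = C *ᵥ w) :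
    star x ⬝ᵥ (S *ᵥ x) ≤ star w ⬝ᵥ (S *ᵥ w) := by
  refine star_dotProduct_mulVec_le_of_star_sub_dotProduct_mulVec_eq_zero hS ?_
  calc star (w - x) ⬝ᵥ (S *ᵥ x)
      = star (C *ᵥ (w - x)) ⬝ᵥ l := by rw [hlagrange, dotProduct_mulVec, star_mulVec]
    _ = 0 := by rw [mulVec_sub, hfeasible, sub_self, star_zero, zero_dotProduct]

end PosSemidef

theorem star_dotProduct_mulVec_le_of_gram_mulVec_eq {m n R : Type*} [Fintype m] [Fintype n]
    [DecidableEq n] [CommRing R] [PartialOrder R] [StarRing R] [IsOrderedAddMonoid R]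
    {S : Matrix n n R} {C : Matrix m n R} {l : m → R} {x w : n → R} (hS : S.PosSemidef)
    (hunit : IsUnit S)
    (hx : x = S⁻¹ *ᵥ (Cᴴ *ᵥ l)) (hl : (C * S⁻¹ * Cᴴ) *ᵥ l = C *ᵥ w) :
    star x ⬝ᵥ (S *ᵥ x) ≤ star w ⬝ᵥ (S *ᵥ w) := by
  apply star_dotProduct_mulVec_le_of_mulVec_eq_conjTranspose_mulVec hS (C := C) (l := l)
  · rw [hx, mulVec_mulVec, mul_nonsing_inv S ((isUnit_iff_isUnit_det S).mp hunit), one_mulVec]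
  · rw [← hl, hx, mulVec_mulVec, mulVec_mulVec, Matrix.mul_assoc]

theorem mul_mul_conjTranspose_apply {m n k l R : Type*} [Fintype n] [Fintype k]
    [NonUnitalSemiring R] [Star R] (A : Matrix m n R) (M : Matrix n k R) (B : Matrix l k R)
    (i : m) (j : l) : (A * M * Bᴴ) i j = A.row i ⬝ᵥ (M *ᵥ star (B.row j)) := by
  rw [Matrix.mul_assoc]
  rfl

theorem conjTranspose_of_star_pair_mulVec {n R : Type*} [NonUnitalCommSemiring R] [StarRing R]
    (u v : n → R) (a b : R) :
    (of ![star u, star v])ᴴ *ᵥ ![a, b] = a • u + b • v := by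
  ext i
  simp [mulVec, dotProduct, mul_comm]

theorem gram_of_star_pair {n R : Type*} [Fintype n] [NonUnitalSemiring R] [StarRing R]
    {M : Matrix n n R} (hM : M.IsHermitian) (u v : n → R) :
    of ![star u, star v] * M * (of ![star u, star v])ᴴ =
      !![star u ⬝ᵥ (M *ᵥ u), star u ⬝ᵥ (M *ᵥ v);
        star (star u ⬝ᵥ (M *ᵥ v)), star v ⬝ᵥ (M *ᵥ v)] := by
  rw [star_star_dotProduct_mulVec_of_isHermitian hM]
  ext i j
  rw [mul_mul_conjTranspose_apply]
  fin_cases i <;> fin_cases j <;> simp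

theorem fin_two_mulVec_cramer_div_det {K : Type*} [Field K] {a b c d : K}
    (hdet : a * d - b * c ≠ 0) (α β : K) :
    !![a, b; c, d] *ᵥ ![(α * d - β * b) / (a * d - b * c), (β * a - α * c) / (a * d - b * c)] =
      ![α, β] := by
  have hcramer : ![(α * d - β * b) / (a * d - b * c), (β * a - α * c) / (a * d - b * c)] =
      (a * d - b * c)⁻¹ • cramer !![a, b; c, d] ![α, β] := by
    ext i
    fin_cases i <;> simp [cramer_apply, det_fin_two, div_eq_inv_mul, mul_comm]
  rw [hcramer, mulVec_smul, mulVec_cramer, det_fin_two_of, inv_smul_smul₀ hdet]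

theorem markowitz_portfolio_optimality_general {n K : Type*} [Fintype n] [DecidableEq n] [Field K]
    [PartialOrder K] [StarRing K] [IsOrderedAddMonoid K] {S : Matrix n n K} (hS : S.PosDef)
    {u v : n → K} {α β A B D : K}
    (hA : A = star u ⬝ᵥ (S⁻¹ *ᵥ u)) (hB : B = star u ⬝ᵥ (S⁻¹ *ᵥ v))
    (hD : D = star v ⬝ᵥ (S⁻¹ *ᵥ v)) (hdet : A * D - B * star B ≠ 0) {x : n → K}
    (hx : x = ((α * D - β * B) / (A * D - B * star B)) • (S⁻¹ *ᵥ u)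
            + ((β * A - α * star B) / (A * D - B * star B)) • (S⁻¹ *ᵥ v))
    {w : n → K} (hu : star u ⬝ᵥ w = α) (hv : star v ⬝ᵥ w = β) :
    star x ⬝ᵥ (S *ᵥ x) ≤ star w ⬝ᵥ (S *ᵥ w) := by
  have hgram : of ![star u, star v] * S⁻¹ * (of ![star u, star v])ᴴ = !![A, B; star B, D] := by
    rw [gram_of_star_pair hS.isHermitian.inv, ← hA, ← hB, ← hD]
  have htarget : of ![star u, star v] *ᵥ w = ![α, β] := by
    rw [← hu, ← hv]
    ext i
    fin_cases i <;> rfl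
  have hmultiplier : (of ![star u, star v] * S⁻¹ * (of ![star u, star v])ᴴ) *ᵥ
      ![(α * D - β * B) / (A * D - B * star B), (β * A - α * star B) / (A * D - B * star B)] =
      of ![star u, star v] *ᵥ w := by
    rw [hgram, htarget, fin_two_mulVec_cramer_div_det hdet]
  refine star_dotProduct_mulVec_le_of_gram_mulVec_eq hS.posSemidef hS.isUnit ?_ hmultiplier
  rw [hx, conjTranspose_of_star_pair_mulVec, mulVec_add, mulVec_smul, mulVec_smul]

/-- If `AD − B² > 0`, then the Markowitz portfolio `w*` minimizes the portfolio
variance among all `w` satisfying the budget constraint `1_p' w = 1` and the target-return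
constraint `μ' w = ρ`. -/
theorem markowitz_portfolio_optimality
    (p : ℕ) (hp : 1 ≤ p) (S : Matrix (Fin p) (Fin p) ℝ)
    (hS : S.PosDef)
    (μ : Fin p → ℝ) (ρ : ℝ)
    (ones : Fin p → ℝ) (hones : ones = fun _ => (1 : ℝ))
    (A B D : ℝ)
    (hA : A = ones ⬝ᵥ (S⁻¹ *ᵥ ones))
    (hB : B = ones ⬝ᵥ (S⁻¹ *ᵥ μ))
    (hD : D = μ ⬝ᵥ (S⁻¹ *ᵥ μ))
    (hdet : 0 < A * D - B ^ 2)
    (wstar : Fin p → ℝ)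
    (hw : wstar = ((D - ρ * B) / (A * D - B ^ 2)) • (S⁻¹ *ᵥ ones)
                + ((ρ * A - B) / (A * D - B ^ 2)) • (S⁻¹ *ᵥ μ)) :
    ∀ w : Fin p → ℝ, ones ⬝ᵥ w = 1 → μ ⬝ᵥ w = ρ →
      wstar ⬝ᵥ (S *ᵥ wstar) ≤ w ⬝ᵥ (S *ᵥ w) :=
  fun _ hbudget hreturn =>
    markowitz_portfolio_optimality_general (α := 1) (β := ρ) hS hA hB hD
      (by simpa [sq] using hdet.ne') (by simpa [sq] using hw) hbudget hreturn
end

section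
/- The gross exposure of the global minimum variance portfolio satisfies ‖w_u‖₁ ≤ (max_{1≤j≤p} ‖Θ_j‖₁) / C₀, where Θ_j denotes the j-th row of Θ and C₀ > 0 is the smallest eigenvalue of Θ. -/
/-!
Every entry of `Θ 1` is a row sum of `Θ`, so `‖Θ 1‖₁ ≤ p · max_j ‖Θ_j‖₁`. The quadratic form at the
all-ones vector, where `‖1‖₂² = p`, gives `1ᵀ Θ 1 ≥ C₀ p` for the normalizing constant. The
dimension `p` cancels in the quotient.
-/

open Matrix Finset

section OrderedRing

variable {ι κ R : Type*} [Fintype κ] [Ring R] [LinearOrder R] [IsOrderedRing R]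

theorem abs_mulVec_one_apply_le (A : Matrix ι κ R) (i : ι) :
    |(A *ᵥ 1) i| ≤ ∑ k, |A i k| := by
  rw [mulVec, dotProduct_one]
  exact abs_sum_le_sum_abs _ _

variable [Fintype ι]

theorem sum_abs_mulVec_one_le_card_mul_sup' [Nonempty ι] (A : Matrix ι κ R) :
    ∑ i, |(A *ᵥ 1) i| ≤ Fintype.card ι * univ.sup' univ_nonempty fun j => ∑ k, |A j k| := by
  rw [← nsmul_eq_mul]
  exact sum_le_card_nsmul _ _ _ fun i hi =>
    (abs_mulVec_one_apply_le A i).trans (le_sup' (fun j => ∑ k, |A j k|) hi)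

theorem sum_abs_smul (c : R) (v : ι → R) : ∑ i, |(c • v) i| = |c| * ∑ i, |v i| := by
  simp only [Pi.smul_apply, smul_eq_mul, abs_mul, mul_sum]

end OrderedRing

section OrderedField

variable {ι K : Type*} [Fintype ι] [Field K]

/-- The global minimum variance portfolio `Θ 1 / (1ᵀ Θ 1)`, written in terms of the precision matrix
`Θ`, the inverse of the covariance matrix. It is `0` when `1ᵀ Θ 1 = 0`. -/
def gmvPortfolio (Θ : Matrix ι ι K) : ι → K :=
  (1 ⬝ᵥ Θ *ᵥ 1)⁻¹ • Θ *ᵥ 1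

variable [LinearOrder K] [IsStrictOrderedRing K]

theorem sum_abs_gmvPortfolio (Θ : Matrix ι ι K) :
    ∑ i, |gmvPortfolio Θ i| = (∑ i, |(Θ *ᵥ 1) i|) / |1 ⬝ᵥ Θ *ᵥ 1| := by
  rw [gmvPortfolio, sum_abs_smul, abs_inv, div_eq_inv_mul]

theorem gmv_gross_exposure_bound_general [Nonempty ι] (Θ : Matrix ι ι K) {C₀ : K} (hC₀ : 0 < C₀)
    (hΘ : C₀ * Fintype.card ι ≤ 1 ⬝ᵥ Θ *ᵥ 1) :
    ∑ i, |gmvPortfolio Θ i| ≤ (univ.sup' univ_nonempty fun j => ∑ k, |Θ j k|) / C₀ := by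
  set M := univ.sup' univ_nonempty fun j => ∑ k, |Θ j k|
  have card_pos : (0 : K) < Fintype.card ι := Nat.cast_pos.mpr Fintype.card_pos
  have num_le : ∑ i, |(Θ *ᵥ 1) i| ≤ Fintype.card ι * M := sum_abs_mulVec_one_le_card_mul_sup' Θ
  have num_nonneg : 0 ≤ ∑ i, |(Θ *ᵥ 1) i| := sum_nonneg fun _ _ => abs_nonneg _
  calc ∑ i, |gmvPortfolio Θ i|
      = (∑ i, |(Θ *ᵥ 1) i|) / |1 ⬝ᵥ Θ *ᵥ 1| := sum_abs_gmvPortfolio Θ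
    _ ≤ (Fintype.card ι * M) / (C₀ * Fintype.card ι) :=
        div_le_div₀ (num_nonneg.trans num_le) num_le (mul_pos hC₀ card_pos)
          (hΘ.trans (le_abs_self _))
    _ = M / C₀ := by rw [mul_comm C₀, mul_div_mul_left _ _ card_pos.ne']

end OrderedField

/-- the gross exposure of the global minimum variance portfolio satisfies
`‖w_u‖₁ ≤ (max_j ‖Θ_j‖₁)/C₀`, where `C₀ > 0` is the smallest eigenvalue of `Θ = Σ⁻¹`
(expressed via the quadratic form lower bound). -/
theorem gmv_gross_exposure_bound
    (p : ℕ) (hp : 1 ≤ p) (S : Matrix (Fin p) (Fin p) ℝ)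
    (hS : S.PosDef)
    (Θ : Matrix (Fin p) (Fin p) ℝ) (hΘ : Θ = S⁻¹)
    (C₀ : ℝ) (hC₀ : 0 < C₀)
    (heig : ∀ x : Fin p → ℝ, C₀ * (x ⬝ᵥ x) ≤ x ⬝ᵥ (Θ *ᵥ x))
    (ones : Fin p → ℝ) (hones : ones = fun _ => (1 : ℝ))
    (wu : Fin p → ℝ)
    (hwu : wu = (ones ⬝ᵥ (Θ *ᵥ ones))⁻¹ • (Θ *ᵥ ones)) :
    (∑ i, |wu i|)
      ≤ (Finset.univ.sup' ⟨⟨0, hp⟩, Finset.mem_univ _⟩ fun j => ∑ k, |Θ j k|) / C₀ := by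
  have : Nonempty (Fin p) := Fin.pos_iff_nonempty.mp hp
  subst hones hwu
  exact gmv_gross_exposure_bound_general Θ hC₀ (by simpa using heig 1)
end

section
/- The Karush–Kuhn–Tucker conditions of the nodewise lasso imply that τ̂² = (1/n) (y − X γ̂)^T y; that is, the penalized residual scale defined by the lasso objective equals the normalized inner product of the lasso residual with the response. -/
open Matrix Finset

/-! Compare the minimizer `γ̂` only with its multiples `t • γ̂`, `t > 0`. On this ray the `ℓ₁`
penalty, although not differentiable in general, is linear in `t`. Stationarity of the objective at
`t = 1` therefore gives `(1/n)⟨y - Xγ̂, Xγ̂⟩ = λ‖γ̂‖₁`, which is the KKT condition paired with `γ̂`;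
adding `(1/n)‖y - Xγ̂‖₂²` to both sides yields the identity. -/

theorem hasDerivAt_smul_one_of_pos_homogeneous {E : Type*} [SMul ℝ E] {p : E → ℝ} {x : E}
    (hp : ∀ t : ℝ, 0 < t → p (t • x) = t * p x) :
    HasDerivAt (fun t : ℝ => p (t • x)) (p x) 1 := by
  have eventually_linear : (fun t : ℝ => p (t • x)) =ᶠ[nhds 1] fun t => t * p x :=
    (eventually_gt_nhds one_pos).mono hp
  exact (hasDerivAt_mul_const (p x)).congr_of_eventuallyEq eventually_linear

theorem isLocalMin_smul_one_of_forall_le {E : Type*} [MulAction ℝ E] {f : E → ℝ} {x : E}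
    (hf : ∀ z, f x ≤ f z) :
    IsLocalMin (fun t : ℝ => f (t • x)) 1 :=
  Filter.Eventually.of_forall fun t => by simpa only [one_smul] using hf (t • x)

section PenalizedLeastSquares

variable {E F : Type*} [AddCommMonoid E] [Module ℝ E] [AddCommGroup F] [Module ℝ F]

/-- The penalized least squares objective `x ↦ ⟨y - A x, y - A x⟩ + 2 p(x)`, of which the lasso is
the case of an `ℓ₁` penalty. The inner product is encoded as a bilinear form `B`, which absorbs any
scaling of the squared error. -/
def penalizedLeastSquares (B : LinearMap.BilinForm ℝ F) (A : E →ₗ[ℝ] F) (p : E → ℝ) (y : F)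
    (x : E) : ℝ :=
  B (y - A x) (y - A x) + 2 * p x

theorem hasDerivAt_bilinForm_sub_smul_self {B : LinearMap.BilinForm ℝ F} (hB : B.IsSymm)
    (y v : F) (t : ℝ) :
    HasDerivAt (fun s : ℝ => B (y - s • v) (y - s • v)) (-2 * B (y - t • v) v) t := by
  have expansion : (fun s : ℝ => B (y - s • v) (y - s • v)) =
      fun s => B y y - s * (2 * B y v) + s ^ 2 * B v v := by
    funext s
    simp only [map_sub, map_smul, LinearMap.sub_apply, LinearMap.smul_apply, smul_eq_mul,
      hB.eq v y]
    ring
  have derivative : -2 * B (y - t • v) v = -(2 * B y v) + 2 * t * B v v := by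
    simp only [map_sub, map_smul, LinearMap.sub_apply, LinearMap.smul_apply, smul_eq_mul]
    ring
  rw [expansion, derivative]
  simpa using ((hasDerivAt_mul_const (2 * B y v)).const_sub (B y y)).fun_add
    ((hasDerivAt_pow 2 t).mul_const (B v v))

theorem bilinForm_residual_fit_eq_penalty {B : LinearMap.BilinForm ℝ F} (hB : B.IsSymm)
    {A : E →ₗ[ℝ] F} {p : E → ℝ} {y : F} {x : E} (hp : ∀ t : ℝ, 0 < t → p (t • x) = t * p x)
    (hmin : IsLocalMin (fun t : ℝ => penalizedLeastSquares B A p y (t • x)) 1) :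
    B (y - A x) (A x) = p x := by
  have hasDerivAt_ray : HasDerivAt (fun t : ℝ => penalizedLeastSquares B A p y (t • x))
      (-2 * B (y - A x) (A x) + 2 * p x) 1 := by
    simpa only [penalizedLeastSquares, map_smul, one_smul] using
      (hasDerivAt_bilinForm_sub_smul_self hB y (A x) 1).fun_add
        ((hasDerivAt_smul_one_of_pos_homogeneous hp).const_mul 2)
  linarith [hmin.hasDerivAt_eq_zero hasDerivAt_ray]

theorem lasso_kkt_tau_identity_general {B : LinearMap.BilinForm ℝ F} (hB : B.IsSymm)
    {A : E →ₗ[ℝ] F} {p : E → ℝ} {y : F} {x : E} (hp : ∀ t : ℝ, 0 < t → p (t • x) = t * p x)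
    (hmin : IsLocalMin (fun t : ℝ => penalizedLeastSquares B A p y (t • x)) 1) :
    B (y - A x) (y - A x) + p x = B (y - A x) y :=
  calc B (y - A x) (y - A x) + p x
      = B (y - A x) (y - A x) + B (y - A x) (A x) := by
        rw [bilinForm_residual_fit_eq_penalty hB hp hmin]
    _ = B (y - A x) y := by rw [← map_add, sub_add_cancel]

end PenalizedLeastSquares

section Lasso

variable {ι κ : Type*} [Fintype ι] [Fintype κ]

theorem smul_dotProductBilin_apply (c : ℝ) (v w : ι → ℝ) :
    (c • dotProductBilin ℝ ℝ) v w = c * (v ⬝ᵥ w) :=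
  rfl

theorem isSymm_smul_dotProductBilin (c : ℝ) :
    LinearMap.BilinForm.IsSymm (c • dotProductBilin (m := ι) ℝ ℝ) :=
  ⟨fun v w => congrArg (c * ·) (dotProduct_comm v w)⟩

theorem dotProduct_sub_self_eq_sum_sq (v w : ι → ℝ) :
    (v - w) ⬝ᵥ (v - w) = ∑ i, (v i - w i) ^ 2 := by
  simp only [dotProduct, Pi.sub_apply, pow_two]

theorem mul_sum_abs_smul_of_pos (lam : ℝ) (γ : κ → ℝ) (t : ℝ) (ht : 0 < t) :
    lam * ∑ k, |(t • γ) k| = t * (lam * ∑ k, |γ k|) := by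
  simp only [Pi.smul_apply, smul_eq_mul, abs_mul, abs_of_pos ht, ← mul_sum, mul_left_comm]

theorem penalizedLeastSquares_dotProductBilin_l1 (c lam : ℝ) (X : Matrix ι κ ℝ) (y : ι → ℝ)
    (γ : κ → ℝ) :
    penalizedLeastSquares (c • dotProductBilin ℝ ℝ) X.mulVecLin (fun β => lam * ∑ k, |β k|) y γ =
      c * ∑ i, (y i - (X *ᵥ γ) i) ^ 2 + 2 * lam * ∑ k, |γ k| := by
  rw [penalizedLeastSquares, smul_dotProductBilin_apply, mulVecLin_apply,
    dotProduct_sub_self_eq_sum_sq, mul_assoc]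

end Lasso

/-- KKT identity for the lasso: if `γ̂` globally minimizes the lasso objective
`γ ↦ (1/n)‖y − Xγ‖₂² + 2λ‖γ‖₁`, then
`τ̂² := (1/n)‖y − Xγ̂‖₂² + λ‖γ̂‖₁ = (1/n)(y − Xγ̂)' y`. -/
theorem lasso_kkt_tau_identity
    (n q : ℕ) (hn : 1 ≤ n) (hq : 1 ≤ q)
    (y : Fin n → ℝ) (X : Matrix (Fin n) (Fin q) ℝ) (lam : ℝ) (hlam : 0 < lam)
    (γhat : Fin q → ℝ)
    (hmin : ∀ γ : Fin q → ℝ,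
      (1 / (n : ℝ)) * (∑ i, (y i - (X *ᵥ γhat) i) ^ 2) + 2 * lam * (∑ k, |γhat k|)
        ≤ (1 / (n : ℝ)) * (∑ i, (y i - (X *ᵥ γ) i) ^ 2) + 2 * lam * (∑ k, |γ k|))
    (τsq : ℝ)
    (hτ : τsq = (1 / (n : ℝ)) * (∑ i, (y i - (X *ᵥ γhat) i) ^ 2) + lam * (∑ k, |γhat k|)) :
    τsq = (1 / (n : ℝ)) * ((y - X *ᵥ γhat) ⬝ᵥ y) := by
  simp only [← penalizedLeastSquares_dotProductBilin_l1] at hmin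
  simpa only [hτ, smul_dotProductBilin_apply, mulVecLin_apply, dotProduct_sub_self_eq_sum_sq] using
    lasso_kkt_tau_identity_general (isSymm_smul_dotProductBilin _)
      (mul_sum_abs_smul_of_pos lam γhat) (isLocalMin_smul_one_of_forall_le hmin)
end

section
/- If τ̂_j² > 0, then the j-th row of the relaxed inverse is an approximate inverse of the Gram matrix in the sense that ‖Σ̂_G Θ̂_j − e_j‖_∞ ≤ λ_j / τ̂_j², where e_j ∈ ℝ^p is the j-th standard unit vector: the j-th coordinate of Σ̂_G Θ̂_j equals exactly 1 and every other coordinate is bounded in absolute value by λ_j / τ̂_j². -/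
open Matrix Finset

/-! The objective depends on the data only through the Gram matrix `S`: a coefficient vector `γ`
corresponds to the point `w = (1, -γ)` of the hyperplane `w j = 1`, where the objective is
`w ⬝ᵥ S *ᵥ w` plus an `ℓ¹` penalty. At a minimizer `v`, convexity of the penalty gives the
variational inequality `lam * ‖v‖ ≤ lam * ‖w‖ + (S *ᵥ v) ⬝ᵥ (w - v)` on the hyperplane, with
`‖·‖` the `ℓ¹` seminorm off `j`. Testing it at `v ± e_k` bounds the `k`-th coordinate of
`S *ᵥ v`; testing it at `e_j` and at its reflection `2 v - e_j` through `v` gives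
`(S *ᵥ v) j = v ⬝ᵥ S *ᵥ v + lam * ‖v‖`. -/

theorem le_add_lineDeriv_of_isMinOn_add {E : Type*} [AddCommGroup E] [Module ℝ E]
    {f φ : E → ℝ} {s : Set E} {x y : E} {f' : ℝ} (hφ : ConvexOn ℝ s φ) (hx : x ∈ s) (hy : y ∈ s)
    (hf : HasLineDerivAt ℝ f f' x (y - x)) (hmin : IsMinOn (fun z => f z + φ z) s x) :
    φ x ≤ φ y + f' := by
  suffices φ x - φ y ≤ f' by linarith
  refine ge_of_tendsto hf.tendsto_slope_zero_right ?_
  filter_upwards [Ioo_mem_nhdsGT one_pos] with t ⟨ht0, ht1⟩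
  have hpoint : x + t • (y - x) = (1 - t) • x + t • y := by module
  have hconv : φ (x + t • (y - x)) ≤ (1 - t) * φ x + t * φ y := by
    rw [hpoint]
    exact hφ.2 hx hy (sub_nonneg.2 ht1.le) ht0.le (sub_add_cancel 1 t)
  have hle : f x + φ x ≤ f (x + t • (y - x)) + φ (x + t • (y - x)) :=
    hmin (hφ.1.add_smul_sub_mem hx hy ⟨ht0.le, ht1.le⟩)
  rw [smul_eq_mul, le_inv_mul_iff₀ ht0]
  linarith

section Gram

variable {ι κ : Type*} [Fintype ι]

theorem isSymm_smul_gram (c : ℝ) (r : Matrix ι κ ℝ) : (c • (rᵀ * r)).IsSymm := by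
  rw [IsSymm, transpose_smul, transpose_mul, transpose_transpose]

variable [Fintype κ]

theorem dotProduct_smul_gram_mulVec (c : ℝ) (r : Matrix ι κ ℝ) (w : κ → ℝ) :
    w ⬝ᵥ (c • (rᵀ * r)) *ᵥ w = c * ∑ i, (r *ᵥ w) i ^ 2 := by
  rw [smul_mulVec, dotProduct_smul, smul_eq_mul, ← mulVec_mulVec, dotProduct_transpose_mulVec]
  simp only [dotProduct, sq]

theorem hasLineDerivAt_dotProduct_mulVec {S : Matrix κ κ ℝ} (hS : S.IsSymm) (v d : κ → ℝ) :
    HasLineDerivAt ℝ (fun w => w ⬝ᵥ S *ᵥ w) (2 * (S *ᵥ v ⬝ᵥ d)) v d := by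
  have hcross : v ⬝ᵥ S *ᵥ d = S *ᵥ v ⬝ᵥ d := by
    rw [dotProduct_mulVec, ← mulVec_transpose, hS.eq]
  have hexpand : (fun t : ℝ => (v + t • d) ⬝ᵥ S *ᵥ (v + t • d)) =
      fun t => v ⬝ᵥ S *ᵥ v + t * (2 * (S *ᵥ v ⬝ᵥ d)) + t ^ 2 * (d ⬝ᵥ S *ᵥ d) := by
    funext t
    simp only [mulVec_add, mulVec_smul, add_dotProduct, dotProduct_add, smul_dotProduct,
      dotProduct_smul, smul_eq_mul, hcross, dotProduct_comm d (S *ᵥ v)]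
    ring
  rw [HasLineDerivAt, hexpand]
  have hlin := ((hasDerivAt_id' (0 : ℝ)).mul_const (2 * (S *ᵥ v ⬝ᵥ d))).const_add (v ⬝ᵥ S *ᵥ v)
  have hquad := ((hasDerivAt_id' (0 : ℝ)).fun_pow 2).mul_const (d ⬝ᵥ S *ᵥ d)
  simpa using hlin.fun_add hquad

end Gram

section Nodewise

variable {ι κ : Type*} [DecidableEq κ]

/-- The coefficients, on all columns, of the residual `r_j - r_{-j} γ`. -/
def residualCoeff (j : κ) (γ : {k // k ≠ j} → ℝ) : κ → ℝ :=
  fun k => if h : k = j then 1 else -γ ⟨k, h⟩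

theorem residualCoeff_self (j : κ) (γ : {k // k ≠ j} → ℝ) : residualCoeff j γ j = 1 :=
  dif_pos rfl

theorem residualCoeff_coe {j : κ} (γ : {k // k ≠ j} → ℝ) (k : {k // k ≠ j}) :
    residualCoeff j γ k = -γ k :=
  dif_neg k.2

theorem inv_smul_residualCoeff (a : ℝ) (j : κ) (γ : {k // k ≠ j} → ℝ) :
    a⁻¹ • residualCoeff j γ = fun k => if h : k = j then 1 / a else -γ ⟨k, h⟩ / a := by
  funext k
  rw [Pi.smul_apply, smul_eq_mul, inv_mul_eq_div, residualCoeff, apply_dite (· / a)]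

theorem range_residualCoeff (j : κ) : Set.range (residualCoeff j) = {w | w j = 1} := by
  refine Set.Subset.antisymm (Set.range_subset_iff.2 (residualCoeff_self j)) fun w hw => ?_
  refine ⟨fun k => -w k, funext fun k => ?_⟩
  by_cases hk : k = j
  · rw [hk, residualCoeff_self, hw]
  · rw [residualCoeff_coe _ ⟨k, hk⟩, neg_neg]

variable [Fintype κ]

theorem mulVec_residualCoeff (r : Matrix ι κ ℝ) (j : κ) (γ : {k // k ≠ j} → ℝ) (i : ι) :
    (r *ᵥ residualCoeff j γ) i = r i j - (r.submatrix id Subtype.val *ᵥ γ) i := by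
  simp only [mulVec, dotProduct, Fintype.sum_eq_add_sum_subtype_ne _ j, residualCoeff_self,
    residualCoeff_coe, submatrix_apply, id_eq, mul_one, mul_neg, sum_neg_distrib, sub_eq_add_neg]

/-- The `ℓ¹` seminorm of the coordinates other than `j`, the penalty of the nodewise lasso. -/
noncomputable def offL1 (j : κ) : Seminorm ℝ (κ → ℝ) :=
  ∑ k : {k // k ≠ j}, (normSeminorm ℝ ℝ).comp (LinearMap.proj k.val)

theorem offL1_apply (j : κ) (w : κ → ℝ) : offL1 j w = ∑ k : {k // k ≠ j}, |w k| := by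
  simp [offL1]

theorem offL1_single_self (j : κ) (a : ℝ) : offL1 j (Pi.single j a) = 0 := by
  rw [offL1_apply]
  exact Fintype.sum_eq_zero _ fun k => by rw [Pi.single_eq_of_ne k.2, abs_zero]

theorem offL1_single_of_ne {j k : κ} (hk : k ≠ j) (a : ℝ) : offL1 j (Pi.single k a) = |a| := by
  rw [offL1_apply, Fintype.sum_eq_single ⟨k, hk⟩, Pi.single_eq_same]
  intro l hl
  rw [Pi.single_eq_of_ne (Subtype.coe_ne_coe.2 hl), abs_zero]

/-- The quadratic form of `S` plus `μ` times the `ℓ¹` seminorm off `j`. On coefficient vectors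
`(1, -γ)`, the choice `μ = 2 * lam` is the nodewise lasso objective, and `μ = lam` is its residual
variance `τ̂_j²`. -/
noncomputable def nodewiseObjective (S : Matrix κ κ ℝ) (j : κ) (μ : ℝ) (w : κ → ℝ) : ℝ :=
  w ⬝ᵥ S *ᵥ w + μ * offL1 j w

theorem nodewiseObjective_smul_gram_residualCoeff [Fintype ι] (c : ℝ) (r : Matrix ι κ ℝ) (j : κ)
    (μ : ℝ) (γ : {k // k ≠ j} → ℝ) :
    nodewiseObjective (c • (rᵀ * r)) j μ (residualCoeff j γ) =
      c * ∑ i, (r i j - (r.submatrix id Subtype.val *ᵥ γ) i) ^ 2 + μ * ∑ k, |γ k| := by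
  simp only [nodewiseObjective, dotProduct_smul_gram_mulVec, mulVec_residualCoeff, offL1_apply,
    residualCoeff_coe, abs_neg]

variable {S : Matrix κ κ ℝ} {j : κ} {lam : ℝ} {v : κ → ℝ}

theorem mul_offL1_le_of_isMinOn (hS : S.IsSymm) (hlam : 0 ≤ lam) (hv : v j = 1)
    (hmin : IsMinOn (nodewiseObjective S j (2 * lam)) {w | w j = 1} v)
    {w : κ → ℝ} (hw : w j = 1) :
    lam * offL1 j v ≤ lam * offL1 j w + S *ᵥ v ⬝ᵥ (w - v) := by
  have hplane : Convex ℝ {w : κ → ℝ | w j = 1} :=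
    (convex_singleton 1).is_linear_preimage (LinearMap.proj (R := ℝ) (φ := fun _ => ℝ) j).isLinear
  have hconv : ConvexOn ℝ {w : κ → ℝ | w j = 1} (fun w => 2 * lam * offL1 j w) :=
    ((offL1 j).convexOn.subset (Set.subset_univ _) hplane).smul (by positivity)
  have hvar := le_add_lineDeriv_of_isMinOn_add hconv hv hw
    (hasLineDerivAt_dotProduct_mulVec hS v (w - v)) hmin
  linarith

theorem abs_mulVec_le_of_isMinOn (hS : S.IsSymm) (hlam : 0 ≤ lam) (hv : v j = 1)
    (hmin : IsMinOn (nodewiseObjective S j (2 * lam)) {w | w j = 1} v) {k : κ} (hk : k ≠ j) :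
    |(S *ᵥ v) k| ≤ lam := by
  have hstep (a : ℝ) : 0 ≤ lam * |a| + (S *ᵥ v) k * a := by
    have hplane : (v + Pi.single k a : κ → ℝ) j = 1 := by
      rw [Pi.add_apply, Pi.single_eq_of_ne' hk, add_zero, hv]
    have hvar := mul_offL1_le_of_isMinOn hS hlam hv hmin hplane
    rw [add_sub_cancel_left, dotProduct_single] at hvar
    have hpen : offL1 j (v + Pi.single k a) ≤ offL1 j v + |a| :=
      (map_add_le_add _ _ _).trans_eq (by rw [offL1_single_of_ne hk])
    linarith [mul_le_mul_of_nonneg_left hpen hlam]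
  have hpos := hstep 1
  have hneg := hstep (-1)
  rw [abs_neg] at hneg
  rw [abs_one] at hpos hneg
  exact abs_le.2 ⟨by linarith, by linarith⟩

theorem mulVec_self_eq_nodewiseObjective_of_isMinOn (hS : S.IsSymm) (hlam : 0 ≤ lam) (hv : v j = 1)
    (hmin : IsMinOn (nodewiseObjective S j (2 * lam)) {w | w j = 1} v) :
    (S *ᵥ v) j = nodewiseObjective S j lam v := by
  have hle := mul_offL1_le_of_isMinOn hS hlam hv hmin (Pi.single_eq_same j 1)
  have hplane : ((2 : ℝ) • v - Pi.single j 1 : κ → ℝ) j = 1 := by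
    rw [Pi.sub_apply, Pi.smul_apply, Pi.single_eq_same, hv]
    norm_num
  have hge := mul_offL1_le_of_isMinOn hS hlam hv hmin hplane
  have hpen : offL1 j ((2 : ℝ) • v - Pi.single j 1) ≤ 2 * offL1 j v := by
    refine (map_sub_le_add _ _ _).trans_eq ?_
    rw [map_smul_eq_mul, Real.norm_two, offL1_single_self, add_zero]
  have hpen' := mul_le_mul_of_nonneg_left hpen hlam
  simp only [dotProduct_sub, dotProduct_smul, dotProduct_single_one, smul_eq_mul,
    offL1_single_self, dotProduct_comm (S *ᵥ v) v] at hle hge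
  unfold nodewiseObjective
  linarith

theorem nodewise_approximate_inverse_row_general (hS : S.IsSymm) (hlam : 0 ≤ lam) (hv : v j = 1)
    (hmin : IsMinOn (nodewiseObjective S j (2 * lam)) {w | w j = 1} v)
    {τsq : ℝ} (hτ : τsq = nodewiseObjective S j lam v) (hτpos : 0 < τsq) :
    (S *ᵥ (τsq⁻¹ • v)) j = 1 ∧
    (∀ k, k ≠ j → |(S *ᵥ (τsq⁻¹ • v)) k| ≤ lam / τsq) ∧
    (∀ k, |(S *ᵥ (τsq⁻¹ • v)) k - (if k = j then 1 else 0)| ≤ lam / τsq) := by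
  have hscale (k : κ) : (S *ᵥ (τsq⁻¹ • v)) k = (S *ᵥ v) k / τsq := by
    rw [mulVec_smul, Pi.smul_apply, smul_eq_mul, inv_mul_eq_div]
  have hdiag : (S *ᵥ (τsq⁻¹ • v)) j = 1 := by
    rw [hscale, mulVec_self_eq_nodewiseObjective_of_isMinOn hS hlam hv hmin, ← hτ,
      div_self hτpos.ne']
  have hoff (k : κ) (hk : k ≠ j) : |(S *ᵥ (τsq⁻¹ • v)) k| ≤ lam / τsq := by
    rw [hscale, abs_div, abs_of_pos hτpos]
    gcongr
    exact abs_mulVec_le_of_isMinOn hS hlam hv hmin hk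
  refine ⟨hdiag, hoff, fun k => ?_⟩
  split_ifs with hk
  · rw [hk, hdiag, sub_self, abs_zero]
    positivity
  · rw [sub_zero]
    exact hoff k hk

end Nodewise

/-- if `τ̂_j² > 0`, the `j`-th row of the relaxed inverse satisfies
`‖Σ̂_G Θ̂_j − e_j‖_∞ ≤ λ_j/τ̂_j²`: its `j`-th coordinate is exactly `1` and every other
coordinate is bounded in absolute value by `λ_j/τ̂_j²`. Columns other than `j` are indexed
by the subtype `{k : Fin p // k ≠ j}`. -/
theorem nodewise_approximate_inverse_row
    (n p : ℕ) (hn : 1 ≤ n) (hp : 2 ≤ p)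
    (r : Matrix (Fin n) (Fin p) ℝ) (j : Fin p)
    (lam : ℝ) (hlam : 0 < lam)
    (γhat : {k : Fin p // k ≠ j} → ℝ)
    (rmj : Matrix (Fin n) {k : Fin p // k ≠ j} ℝ)
    (hrmj : rmj = fun i k => r i k.val)
    (hmin : ∀ γ : {k : Fin p // k ≠ j} → ℝ,
      (1 / (n : ℝ)) * (∑ i, (r i j - (rmj *ᵥ γhat) i) ^ 2) + 2 * lam * (∑ k, |γhat k|)
        ≤ (1 / (n : ℝ)) * (∑ i, (r i j - (rmj *ᵥ γ) i) ^ 2) + 2 * lam * (∑ k, |γ k|))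
    (τsq : ℝ)
    (hτ : τsq = (1 / (n : ℝ)) * (∑ i, (r i j - (rmj *ᵥ γhat) i) ^ 2)
                  + lam * (∑ k, |γhat k|))
    (hτpos : 0 < τsq)
    (SigmaG : Matrix (Fin p) (Fin p) ℝ) (hSG : SigmaG = (1 / (n : ℝ)) • (rᵀ * r))
    (Θj : Fin p → ℝ)
    (hΘj : Θj = fun k => if h : k = j then 1 / τsq else -γhat ⟨k, h⟩ / τsq) :
    (SigmaG *ᵥ Θj) j = 1 ∧
    (∀ k : Fin p, k ≠ j → |(SigmaG *ᵥ Θj) k| ≤ lam / τsq) ∧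
    (∀ k : Fin p, |(SigmaG *ᵥ Θj) k - (if k = j then 1 else 0)| ≤ lam / τsq) := by
  obtain rfl : rmj = r.submatrix id Subtype.val := hrmj
  simp only [← nodewiseObjective_smul_gram_residualCoeff, ← hSG] at hmin hτ
  have hsymm : SigmaG.IsSymm := hSG ▸ isSymm_smul_gram _ r
  have hminOn : IsMinOn (nodewiseObjective SigmaG j (2 * lam)) {w | w j = 1}
      (residualCoeff j γhat) :=
    range_residualCoeff j ▸ isMinOn_iff.2 (Set.forall_mem_range.2 hmin)
  rw [hΘj, ← inv_smul_residualCoeff]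
  exact nodewise_approximate_inverse_row_general hsymm hlam.le (residualCoeff_self j γhat) hminOn
    hτ hτpos
end
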